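/- Let Λ be a numerical semigroup with genus g and conductor c, and let d be the greatest common divisor of the elements of Λ smaller than c (i.e., of λ_0, …, λ_{c−g−1}). Then Λ lies in some infinite chain (that is, there exists an infinite chain (Λ_i)_{i≥0} and an index i with Λ_i = Λ) if and only if d ≠ 1. -/

import Mathlib

/-! Both directions compare a chain with the intersection of its members.

If `d ≠ 1`, choose a prime `p ∣ d`. The set `T = S ∩ pℕ` is an additive submonoid with infinitely
many gaps, and `S = T ∪ [c, ∞)`. Filling in all but the first `i` gaps of `T` gives, as `i` varies,
an infinite chain (`gapChain_isInfiniteChain`), and `S` is the member whose index is the number of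
gaps of `T` below `c`.

Conversely, in a chain through `S = L i` every number removed after step `i` is at least `c`, so the
elements of `S` below `c`, and hence the monoid they generate, lie in every later `L j`. If their gcd
is `1`, this monoid has finite complement (`Nat.exists_mem_closure_of_ge`), whereas `L j` has at
least `j` gaps. -/


/-- A numerical semigroup: a subset of ℕ containing 0, closed under addition,
with finite complement. -/
def IsNumericalSemigroup (S : Set ℕ) : Prop :=
  0 ∈ S ∧ (∀ a ∈ S, ∀ b ∈ S, a + b ∈ S) ∧ Sᶜ.Finite

/-- The conductor: the smallest `c` such that every `n ≥ c` belongs to `S`. -/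
noncomputable def nsConductor (S : Set ℕ) : ℕ :=
  sInf {c : ℕ | ∀ n : ℕ, c ≤ n → n ∈ S}

/-- The genus: the number of gaps. -/
noncomputable def nsGenus (S : Set ℕ) : ℕ := Sᶜ.ncard

/-- The enumeration of `S`: the unique increasing bijection `ℕ → S`,
`λ_0 = 0 < λ_1 < λ_2 < ⋯`. -/
noncomputable def nsEnum (S : Set ℕ) : ℕ → ℕ := Nat.nth (· ∈ S)

/-- A generator: a nonzero element that is not a sum of two nonzero elements. -/
def IsGenerator (S : Set ℕ) (x : ℕ) : Prop :=
  x ∈ S ∧ x ≠ 0 ∧ ¬ ∃ a ∈ S, ∃ b ∈ S, a ≠ 0 ∧ b ≠ 0 ∧ a + b = x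

/-- An ordinary numerical semigroup: `{0} ∪ [c, ∞)`. -/
def IsOrdinary (S : Set ℕ) : Prop := S = {0} ∪ Set.Ici (nsConductor S)

/-- An effective generator: a generator that is ≥ the conductor. -/
def IsEffectiveGenerator (S : Set ℕ) (x : ℕ) : Prop :=
  IsGenerator S x ∧ nsConductor S ≤ x

/-- A strong generator: an effective generator `x` such that `x + λ₁` is a
generator of `S \ {x}`. -/
def IsStrongGenerator (S : Set ℕ) (x : ℕ) : Prop :=
  IsEffectiveGenerator S x ∧ IsGenerator (S \ {x}) (x + nsEnum S 1)

/-- The Frobenius number: the largest gap. -/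
noncomputable def nsFrobenius (S : Set ℕ) : ℕ := sSup Sᶜ

/-- An infinite chain of numerical semigroups: `Λ_0 = ℕ` and each `Λ_i` is
obtained from `Λ_{i+1}` by adjoining its Frobenius number. -/
def IsInfiniteChain (L : ℕ → Set ℕ) : Prop :=
  (∀ i, IsNumericalSemigroup (L i)) ∧ L 0 = Set.univ ∧
  ∀ i, L (i + 1) ≠ Set.univ ∧ L i = L (i + 1) ∪ {nsFrobenius (L (i + 1))}

/-- `T` is a descendant of `S`: `T ⊆ S` and they agree below the conductor of `S`. -/
def IsDescendant (S T : Set ℕ) : Prop :=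
  IsNumericalSemigroup T ∧ T ⊆ S ∧
  T ∩ Set.Iio (nsConductor S) = S ∩ Set.Iio (nsConductor S)

open Classical in
/-- The set `T` together with all of its gaps except the `i` smallest ones. The number of gaps
below `x` is `Nat.count (· ∉ T) x`, so the `i` smallest are those where this count is `< i`. -/
def gapChain (T : Set ℕ) (i : ℕ) : Set ℕ := {x | x ∈ T ∨ i ≤ Nat.count (· ∉ T) x}

/-- Membership in `gapChain`, for any decidability instance rather than the classical one. -/
theorem mem_gapChain {T : Set ℕ} [DecidablePred (· ∉ T)] {i x : ℕ} :
    x ∈ gapChain T i ↔ (x ∈ T ∨ i ≤ Nat.count (· ∉ T) x) := by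
  simp only [gapChain, Set.mem_ofPred_eq]
  convert Iff.rfl

theorem gapChain_isInfiniteChain (T : Set ℕ) (h0 : 0 ∈ T)
    (hadd : ∀ a ∈ T, ∀ b ∈ T, a + b ∈ T) (hinf : Tᶜ.Infinite) :
    IsInfiniteChain (gapChain T) := by
  classical
  have hinf' : (Set.ofPred fun x => x ∉ T).Infinite := hinf
  have hcompl : ∀ i, (gapChain T i)ᶜ ⊆ Set.Iio (Nat.nth (· ∉ T) i) := by
    intro i x hx
    rw [Set.mem_compl_iff, mem_gapChain, not_or, not_le] at hx
    by_contra hlt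
    simp only [Set.mem_Iio, not_lt] at hlt
    have := Nat.count_monotone (· ∉ T) hlt
    rw [Nat.count_nth_of_infinite hinf'] at this
    omega
  refine ⟨fun i => ⟨Or.inl h0, ?_, (Set.finite_Iio _).subset (hcompl i)⟩, ?_, ?_⟩
  · rintro a (ha | ha) b (hb | hb)
    · exact Or.inl (hadd a ha b hb)
    · exact Or.inr (hb.trans (Nat.count_monotone _ (by omega)))
    · exact Or.inr (ha.trans (Nat.count_monotone _ (by omega)))
    · exact Or.inr (ha.trans (Nat.count_monotone _ (by omega)))
  · ext x
    simp [mem_gapChain]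
  · intro i
    have hh : Nat.nth (· ∉ T) i ∉ T := Nat.nth_mem_of_infinite hinf' i
    have hcount : Nat.count (· ∉ T) (Nat.nth (· ∉ T) i) = i := Nat.count_nth_of_infinite hinf' i
    have hnot : Nat.nth (· ∉ T) i ∉ gapChain T (i + 1) := by
      rw [mem_gapChain, hcount]; simp [hh]
    have hle : ∀ x ∈ (gapChain T (i + 1))ᶜ, x ≤ Nat.nth (· ∉ T) i := by
      intro x hx
      rw [Set.mem_compl_iff, mem_gapChain] at hx
      push Not at hx
      by_contra hlt
      have := Nat.count_monotone (· ∉ T) (show Nat.nth (· ∉ T) i + 1 ≤ x by omega)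
      rw [Nat.count_succ, hcount, if_pos hh] at this
      omega
    have hfrob : nsFrobenius (gapChain T (i + 1)) = Nat.nth (· ∉ T) i :=
      IsGreatest.csSup_eq ⟨hnot, hle⟩
    refine ⟨fun h => hnot (h ▸ Set.mem_univ _), ?_⟩
    rw [hfrob]
    ext x
    rw [Set.mem_union, Set.mem_singleton_iff, mem_gapChain, mem_gapChain]
    constructor
    · rintro (hx | hx)
      · exact Or.inl (Or.inl hx)
      · by_cases hxT : x ∈ T
        · exact Or.inl (Or.inl hxT)
        · rcases hx.eq_or_lt with h | h
          · right
            rw [h, Nat.nth_count hxT]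
          · exact Or.inl (Or.inr h)
    · rintro ((hx | hx) | rfl)
      · exact Or.inl hx
      · exact Or.inr (by omega)
      · exact Or.inr hcount.ge

theorem mem_of_nsConductor_le {S : Set ℕ} (hS : IsNumericalSemigroup S) {x : ℕ}
    (hx : nsConductor S ≤ x) : x ∈ S := by
  have hne : {c : ℕ | ∀ n : ℕ, c ≤ n → n ∈ S}.Nonempty := by
    obtain ⟨b, hb⟩ := hS.2.2.bddAbove
    refine ⟨b + 1, fun n hn => ?_⟩
    by_contra h
    have := hb h
    omega
  exact Nat.sInf_mem hne x hx

theorem IsInfiniteChain.frobenius_isGreatest {L : ℕ → Set ℕ} (hL : IsInfiniteChain L) (j : ℕ) :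
    IsGreatest (L (j + 1))ᶜ (nsFrobenius (L (j + 1))) := by
  have hne : (L (j + 1))ᶜ.Nonempty := Set.nonempty_compl.2 (hL.2.2 j).1
  have hb := (hL.1 (j + 1)).2.2.bddAbove
  exact ⟨Nat.sSup_mem hne hb, fun x hx => le_csSup hb hx⟩

theorem IsInfiniteChain.antitone {L : ℕ → Set ℕ} (hL : IsInfiniteChain L) : Antitone L := by
  refine antitone_nat_of_succ_le fun j => ?_
  rw [(hL.2.2 j).2]
  exact Set.subset_union_left

/-- Every number removed at or after step `i` is at least the conductor of `L i`. -/
theorem IsInfiniteChain.nsConductor_le {L : ℕ → Set ℕ} (hL : IsInfiniteChain L) {i j : ℕ}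
    (hij : i ≤ j) : nsConductor (L i) ≤ nsFrobenius (L (j + 1)) := by
  refine Nat.sInf_le fun n hn => hL.antitone hij ?_
  rw [(hL.2.2 j).2]
  rcases hn.eq_or_lt with h | h
  · exact Or.inr h.symm
  · left
    by_contra hc
    have := (hL.frobenius_isGreatest j).2 hc
    omega

theorem IsInfiniteChain.mem_of_lt {L : ℕ → Set ℕ} (hL : IsInfiniteChain L) {i x : ℕ}
    (hx : x ∈ L i) (hxc : x < nsConductor (L i)) (j : ℕ) : x ∈ L j := by
  rcases le_total j i with h | h
  · exact hL.antitone h hx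
  · induction j, h using Nat.le_induction with
    | base => exact hx
    | succ j hij ih =>
      rw [(hL.2.2 j).2] at ih
      rcases ih with ih | ih
      · exact ih
      · have := hL.nsConductor_le hij
        rw [Set.mem_singleton_iff] at ih
        omega

theorem IsInfiniteChain.le_ncard {L : ℕ → Set ℕ} (hL : IsInfiniteChain L) (j : ℕ) :
    j ≤ (L j)ᶜ.ncard := by
  induction j with
  | zero => exact Nat.zero_le _
  | succ j ih =>
    have hlt : (L j)ᶜ ⊂ (L (j + 1))ᶜ := by
      refine ⟨Set.compl_subset_compl.2 (hL.antitone j.le_succ), fun h => ?_⟩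
      refine h (hL.frobenius_isGreatest j).1 ?_
      rw [(hL.2.2 j).2]
      exact Or.inr rfl
    have := Set.ncard_lt_ncard hlt (hL.1 (j + 1)).2.2
    omega

/-- A numerical semigroup lies in an infinite chain iff the gcd
`d` of its elements smaller than the conductor is different from `1`. -/
theorem stmt_13 (S : Set ℕ) (hS : IsNumericalSemigroup S) (d : ℕ)
    (hdiv : ∀ x ∈ S, x < nsConductor S → d ∣ x)
    (hgcd : ∀ e : ℕ, (∀ x ∈ S, x < nsConductor S → e ∣ x) → e ∣ d) :
    (∃ L : ℕ → Set ℕ, IsInfiniteChain L ∧ ∃ i : ℕ, L i = S) ↔ d ≠ 1 := by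
  classical
  constructor
  · rintro ⟨L, hL, i, rfl⟩ rfl
    set A : Set ℕ := {x | x ∈ L i ∧ x < nsConductor (L i)}
    have hA : Nat.setGcd A = 1 :=
      Nat.dvd_one.1 (hgcd _ fun x hx hxc => Nat.setGcd_dvd_of_mem ⟨hx, hxc⟩)
    obtain ⟨n, hn⟩ := Nat.exists_mem_closure_of_ge A
    have hcl : ∀ j, ∀ m ∈ AddSubmonoid.closure A, m ∈ L j := by
      intro j m hm
      induction hm using AddSubmonoid.closure_induction with
      | mem x hx => exact hL.mem_of_lt hx.1 hx.2 j
      | zero => exact (hL.1 j).1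
      | add a b _ _ ha hb => exact (hL.1 j).2.1 a ha b hb
    have hsub : (L (n + 1))ᶜ ⊆ Set.Iio n := by
      intro m hm
      by_contra hlt
      exact hm (hcl _ m (hn m (not_lt.1 hlt) (hA ▸ one_dvd m)))
    have h1 := Set.ncard_le_ncard hsub (Set.finite_Iio n)
    have h2 := hL.le_ncard (n + 1)
    have h3 : (Set.Iio n).ncard = n := by
      rw [← Finset.coe_Iio, Set.ncard_coe_finset, Nat.card_Iio]
    omega
  · intro hd
    obtain ⟨p, hp, hpd⟩ := Nat.exists_prime_and_dvd hd
    set T : Set ℕ := {x | x ∈ S ∧ p ∣ x}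
    have hinf : Tᶜ.Infinite := by
      refine Set.infinite_of_injective_forall_mem (f := fun k : ℕ => p * k + 1) ?_ ?_
      · intro a b hab
        exact Nat.eq_of_mul_eq_mul_left hp.pos (Nat.succ_injective hab)
      · rintro k ⟨-, hk⟩
        exact hp.one_lt.ne' (Nat.dvd_one.1 ((Nat.dvd_add_right (dvd_mul_right p k)).1 hk))
    refine ⟨gapChain T, gapChain_isInfiniteChain T ⟨hS.1, dvd_zero p⟩ ?_ hinf,
      Nat.count (· ∉ T) (nsConductor S), ?_⟩
    · exact fun a ha b hb => ⟨hS.2.1 a ha.1 b hb.1, dvd_add ha.2 hb.2⟩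
    · ext x
      rw [mem_gapChain]
      constructor
      · rintro (hx | hx)
        · exact hx.1
        · by_contra hxS
          have hxT : x ∉ T := fun h => hxS h.1
          have hlt : x < nsConductor S := by
            by_contra h
            exact hxS (mem_of_nsConductor_le hS (not_lt.1 h))
          -- A gap `x < c` of `T` makes the count at `c` strictly larger than at `x`.
          have := Nat.count_strict_mono (p := (· ∉ T)) hxT hlt
          omega
      · intro hx
        rcases lt_or_ge x (nsConductor S) with h | h
        · exact Or.inl ⟨hx, hpd.trans (hdiv x hx h)⟩
        · exact Or.inr (Nat.count_monotone _ h)
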